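/- Let R be a 3-dimensional regular local ring with m = (x, y, z), and I the ideal of maximal minors of ((x, y, z), (y, z, x²)). Then the ε-multiplicity ε(I) := lim_{n→∞} (3!/n³)·length_R(I^{(n)}/Iⁿ) exists and equals 1/2. -/

import Mathlib

open IsLocalRing Filter

/-- The `n`-th symbolic power `I⁽ⁿ⁾ = ⋂_{p ∈ Min(R/I)} (IⁿR_p ∩ R)`. -/
noncomputable def symbolicPower {R : Type*} [CommRing R] (I : Ideal R) (n : ℕ) : Ideal R :=
  ⨅ p : I.minimalPrimes,
    haveI : Ideal.IsPrime (p : Ideal R) := p.2.1.1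
    Ideal.comap (algebraMap R (Localization.AtPrime (p : Ideal R)))
      (Ideal.map (algebraMap R (Localization.AtPrime (p : Ideal R))) (I ^ n))

/-- `M` has (finite) length `n` over `R`: there is a composition series from
`⊥` to `⊤` of length `n`. -/
def HasLength (R M : Type*) [CommRing R] [AddCommGroup M] [Module R M] (n : ℕ) : Prop :=
  ∃ s : CompositionSeries (Submodule R M), s.head = ⊥ ∧ s.last = ⊤ ∧ s.length = n

/-- Generators and dimension bound pass to the quotient by part of a system of generators of
the maximal ideal. -/
theorem exists_isLocalRing_quotient_span {R : Type*} [CommRing R] [IsNoetherianRing R]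
    [IsLocalRing R] {n : ℕ} (s : Finset R) (v : Fin n → R)
    (hv : maximalIdeal R = Ideal.span (s ∪ Set.range v))
    (hn : ((n + s.card : ℕ) : WithBot ℕ∞) ≤ ringKrullDim R) :
    ∃ _ : IsLocalRing (R ⧸ Ideal.span (s : Set R)),
      maximalIdeal (R ⧸ Ideal.span (s : Set R)) =
        Ideal.span (Set.range fun j => Ideal.Quotient.mk (Ideal.span (s : Set R)) (v j)) ∧
      (n : WithBot ℕ∞) ≤ ringKrullDim (R ⧸ Ideal.span (s : Set R)) := by
  have hs : Ideal.span (s : Set R) ≤ maximalIdeal R := hv ▸ Ideal.span_mono Set.subset_union_left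
  have : Nontrivial (R ⧸ Ideal.span (s : Set R)) :=
    Ideal.Quotient.nontrivial_iff.2 fun h =>
      (maximalIdeal.isMaximal R).ne_top (top_le_iff.1 (h ▸ hs))
  have hloc : IsLocalRing (R ⧸ Ideal.span (s : Set R)) :=
    .of_surjective' (Ideal.Quotient.mk _) Ideal.Quotient.mk_surjective
  refine ⟨hloc, ?_, ?_⟩
  · rw [← IsLocalRing.map_maximalIdeal_of_surjective (Ideal.Quotient.mk _)
      Ideal.Quotient.mk_surjective, hv, Ideal.span_union, Ideal.map_sup, Ideal.map_quotient_self,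
      bot_sup_eq, Ideal.map_span, ← Set.range_comp]
    rfl
  · have h1 := ringKrullDim_le_ringKrullDim_quotient_add_card (R := R) s (by
      rw [ringJacobson_eq_maximalIdeal]
      exact Ideal.span_le.1 hs)
    have h2 := hn.trans h1
    generalize ringKrullDim (R ⧸ Ideal.span (s : Set R)) = d at h2 ⊢
    induction d with
    | bot => simp at h2
    | coe d =>
      have h3 : ((n : ℕ∞) + s.card ≤ d + s.card) := by exact_mod_cast h2
      have h4 : (n : ℕ∞) ≤ d := (ENat.add_le_add_iff_right (ENat.natCast_ne_top _)).1 h3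
      exact_mod_cast h4

/-- Noetherian local ring whose maximal ideal has at most `dim R` generators is a domain. -/
theorem isDomain_of_le_ringKrullDim {R : Type*} [CommRing R] [IsNoetherianRing R]
    [IsLocalRing R] {n : ℕ} (v : Fin n → R) (hv : maximalIdeal R = Ideal.span (Set.range v))
    (hn : (n : WithBot ℕ∞) ≤ ringKrullDim R) : IsDomain R := by
  induction n generalizing R with
  | zero =>
    rw [Set.range_eq_empty, Ideal.span_empty] at hv
    exact ((isField_iff_maximalIdeal_eq).2 hv).isDomain
  | succ n ih =>
    have hmin : ∀ p ∈ minimalPrimes R, ¬ maximalIdeal R ≤ p := by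
      intro p hp hle
      have hpm : p = maximalIdeal R :=
        le_antisymm (le_maximalIdeal hp.1.1.ne_top) hle
      have h0 : (maximalIdeal R).height = 0 := by
        rw [← hpm]
        have := hp.1.1
        exact Ideal.height_eq_zero_iff.2 hp
      rw [← maximalIdeal_height_eq_ringKrullDim, h0] at hn
      have : ((n + 1 : ℕ) : ℕ∞) ≤ 0 := by exact_mod_cast hn
      simp at this
    have hsq : ¬ maximalIdeal R ≤ maximalIdeal R ^ 2 := by
      intro hle
      have hbot : maximalIdeal R = ⊥ := by
        refine Submodule.eq_bot_of_le_smul_of_le_jacobson_bot (maximalIdeal R) _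
          (IsNoetherian.noetherian _) ?_ (maximalIdeal_le_jacobson _)
        rwa [smul_eq_mul, ← pow_two]
      obtain ⟨p, hp⟩ := Ideal.nonempty_minimalPrimes (bot_ne_top : (⊥ : Ideal R) ≠ ⊤)
      exact hmin p hp (hbot ▸ bot_le)
    obtain ⟨w, hw, hw2, hwp⟩ : ∃ w ∈ maximalIdeal R, w ∉ maximalIdeal R ^ 2 ∧
        ∀ p ∈ minimalPrimes R, w ∉ p := by
      by_contra! hcon
      have := (Ideal.subset_union_prime_finite (I := maximalIdeal R)
        ((minimalPrimes.finite_of_isNoetherianRing R).insert (maximalIdeal R ^ 2)) (f := id)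
        (maximalIdeal R ^ 2) (maximalIdeal R ^ 2) (by
          rintro i (rfl | hi) h1 _
          · exact absurd rfl h1
          · exact hi.1.1)).1 (by
          intro w hw
          by_cases h2 : w ∈ maximalIdeal R ^ 2
          · exact Set.mem_biUnion (Set.mem_insert _ _) h2
          · obtain ⟨p, hp, hwp⟩ := hcon w hw h2
            exact Set.mem_biUnion (Set.mem_insert_of_mem _ hp) hwp)
      obtain ⟨i, rfl | hi, hle⟩ := this
      · exact hsq hle
      · exact hmin i hi hle
    obtain ⟨c, hc⟩ := (Ideal.mem_span_range_iff_exists_fun).1 (hv ▸ hw)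
    obtain ⟨i, hi⟩ : ∃ i, IsUnit (c i) := by
      by_contra! hcon
      apply hw2
      rw [← hc, pow_two]
      exact Ideal.sum_mem _ fun i _ => Ideal.mul_mem_mul
        ((mem_maximalIdeal _).2 (hcon i)) (hv ▸ Ideal.subset_span ⟨i, rfl⟩)
    have hle : Ideal.span {w} ≤ maximalIdeal R := by
      rwa [Ideal.span_singleton_le_iff_mem]
    have hgen : maximalIdeal R = Ideal.span
        ((({w} : Finset R) : Set R) ∪ Set.range fun j => v (i.succAbove j)) := by
      apply le_antisymm
      · have hmem : ∀ j, v (i.succAbove j) ∈ Ideal.span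
            ((({w} : Finset R) : Set R) ∪ Set.range fun j => v (i.succAbove j)) :=
          fun j => Ideal.subset_span (.inr ⟨j, rfl⟩)
        have hwmem : w ∈ Ideal.span
            ((({w} : Finset R) : Set R) ∪ Set.range fun j => v (i.succAbove j)) :=
          Ideal.subset_span (.inl (by simp))
        rw [hv, Ideal.span_le]
        rintro _ ⟨k, rfl⟩
        rcases Fin.eq_self_or_eq_succAbove i k with rfl | ⟨j, rfl⟩
        · rw [Fin.sum_univ_succAbove _ k, ← eq_sub_iff_add_eq] at hc
          rw [SetLike.mem_coe, ← Ideal.unit_mul_mem_iff_mem _ hi, hc]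
          exact sub_mem hwmem (Ideal.sum_mem _ fun j _ => Ideal.mul_mem_left _ _ (hmem j))
        · exact hmem j
      · rw [Ideal.span_le]
        rintro _ (h | ⟨j, rfl⟩)
        · rw [Finset.coe_singleton, Set.mem_singleton_iff] at h
          exact h ▸ hw
        · exact hv ▸ Ideal.subset_span ⟨_, rfl⟩
    have hdom : IsDomain (R ⧸ Ideal.span {w}) := by
      obtain ⟨hloc, hmax, hdim⟩ := exists_isLocalRing_quotient_span {w} _ hgen (by simpa using hn)
      rw [← Finset.coe_singleton]
      exact ih _ hmax hdim
    have hprime : (Ideal.span {w}).IsPrime := (Ideal.Quotient.isDomain_iff_prime _).1 hdom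
    obtain ⟨p, hp, hpw⟩ := Ideal.exists_minimalPrimes_le (I := ⊥) (J := Ideal.span {w}) bot_le
    have hpp := hp.1.1
    have hbot : p = ⊥ := by
      refine Submodule.eq_bot_of_le_smul_of_le_jacobson_bot (Ideal.span {w}) _
          (IsNoetherian.noetherian _) ?_ (hle.trans (maximalIdeal_le_jacobson _))
      intro t ht
      obtain ⟨q, rfl⟩ := Ideal.mem_span_singleton'.1 (hpw ht)
      rw [smul_eq_mul, mul_comm q]
      exact Ideal.mul_mem_mul (Ideal.mem_span_singleton_self w)
        ((hpp.mem_or_mem ht).resolve_right (hwp p hp))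
    exact IsDomain.of_bot_isPrime R (hbp := hbot ▸ hpp)

/-- Consecutive quotients of a three-dimensional regular local ring by a regular system of
parameters are domains. -/
theorem regular_parameters {R : Type*} [CommRing R] [IsNoetherianRing R]
    [IsLocalRing R] (hdim : ringKrullDim R = 3) (a b c : R)
    (h : maximalIdeal R = Ideal.span {a, b, c}) :
    IsDomain R ∧ (Ideal.span {a}).IsPrime ∧ (Ideal.span {a, b}).IsPrime ∧
      c ∉ Ideal.span {a, b} := by
  classical
  have hc : c ∉ Ideal.span {a, b} := by
    intro hc
    have h' : maximalIdeal R = Ideal.span {a, b} := by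
      rw [h]
      refine le_antisymm (Ideal.span_le.2 ?_) (Ideal.span_mono (by grind))
      rintro _ (rfl | rfl | rfl)
      · exact Ideal.subset_span (by simp)
      · exact Ideal.subset_span (by simp)
      · exact hc
    have h1 := ringKrullDim_le_spanFinrank_maximalIdeal (R := R)
    rw [hdim, h'] at h1
    have h2 := Submodule.spanFinrank_span_le_ncard_of_finite (R := R) (s := {a, b}) (by simp)
    have h3 : ({a, b} : Set R).ncard ≤ 2 := by
      simpa using Set.ncard_insert_le a {b}
    have h4 : 3 ≤ (Ideal.span {a, b}).spanFinrank := by exact_mod_cast h1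
    exact absurd (h4.trans (h2.trans h3)) (by norm_num)
  refine ⟨isDomain_of_le_ringKrullDim ![a, b, c] ?_ (by simp [hdim]), ?_, ?_, hc⟩
  · rw [h]; congr 1; ext; simp [eq_comm]; tauto
  · obtain ⟨_, hmax, hd⟩ := exists_isLocalRing_quotient_span (R := R) {a} ![b, c] (by
      rw [h]; congr 1; ext; simp [eq_comm]; tauto) (by simp [hdim])
    rw [← Finset.coe_singleton, ← Ideal.Quotient.isDomain_iff_prime]
    exact isDomain_of_le_ringKrullDim _ hmax hd
  · have hcard : ({a, b} : Finset R).card ≤ 2 := Finset.card_le_two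
    obtain ⟨_, hmax, hd⟩ := exists_isLocalRing_quotient_span (R := R) {a, b} ![c] (by
      rw [h]; congr 1; ext; simp [eq_comm]; tauto) (by
      rw [hdim]
      exact_mod_cast (show 1 + ({a, b} : Finset R).card ≤ 3 by omega))
    rw [← Finset.coe_pair, ← Ideal.Quotient.isDomain_iff_prime]
    exact isDomain_of_le_ringKrullDim _ hmax hd

/-- If `p, q, e` behave like a regular sequence, then `e` is a nonzerodivisor modulo `(p, q ^ k)`. -/
theorem mem_span_pair_pow_of_mul_mem {R : Type*} [CommRing R] {p q e : R}
    (hp : (Ideal.span {p}).IsPrime) (hpq : (Ideal.span {p, q}).IsPrime)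
    (hq : q ∉ Ideal.span {p}) (he : e ∉ Ideal.span {p, q}) (k : ℕ) {u : R}
    (h : e * u ∈ Ideal.span {p, q ^ k}) : u ∈ Ideal.span {p, q ^ k} := by
  induction k generalizing u with
  | zero =>
    have : Ideal.span {p, q ^ 0} = ⊤ := Ideal.eq_top_of_isUnit_mem _
      (Ideal.subset_span (Set.mem_insert_of_mem _ rfl)) (by simp)
    rw [this]
    trivial
  | succ k ih =>
    obtain ⟨r, s, hrs⟩ := Ideal.mem_span_pair.1 h
    have hu : u ∈ Ideal.span {p, q} := by
      refine (hpq.mem_or_mem (?_ : e * u ∈ _)).resolve_left he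
      exact Ideal.mem_span_pair.2 ⟨r, s * q ^ k, by rw [← hrs]; ring⟩
    obtain ⟨t, w, rfl⟩ := Ideal.mem_span_pair.1 hu
    have h1 : q * (e * w - s * q ^ k) ∈ Ideal.span {p} :=
      Ideal.mem_span_singleton'.2 ⟨r - e * t, by linear_combination hrs⟩
    obtain ⟨m, hm⟩ := Ideal.mem_span_singleton'.1 ((hp.mem_or_mem h1).resolve_left hq)
    obtain ⟨a, b, hab⟩ := Ideal.mem_span_pair.1
      (ih (Ideal.mem_span_pair.2 ⟨m, s, by rw [hm]; ring⟩) : w ∈ _)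
    exact Ideal.mem_span_pair.2 ⟨t + a * q, b, by rw [← hab]; ring⟩

/-- In a three-dimensional regular local ring, monomials in a regular system of parameters are
not in the monomial ideals they should not be in. -/
theorem monomial_notMem_span {R : Type*} [CommRing R] [IsNoetherianRing R]
    [IsLocalRing R] (hdim : ringKrullDim R = 3) (x y z : R)
    (h : maximalIdeal R = Ideal.span {x, y, z}) (a b c : ℕ) :
    x ^ a * y ^ b * z ^ c ∉ Ideal.span {x ^ (a + 1), y ^ (b + 1), z ^ (c + 1)} := by
  obtain ⟨hdom, hx, hxy, hz⟩ := regular_parameters hdim x y z h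
  obtain ⟨-, hy, hyz, hx'⟩ := regular_parameters hdim y z x
    (by rw [h]; congr 1; ext; simp; tauto)
  obtain ⟨-, hz', hzx, hy'⟩ := regular_parameters hdim z x y
    (by rw [h]; congr 1; ext; simp; tauto)
  have hxz : (Ideal.span {x, z}).IsPrime := by rwa [Set.pair_comm]
  have hyxz : y ∉ Ideal.span {x, z} := by rwa [Set.pair_comm]
  have hnotMem {p q r : R} (h : r ∉ Ideal.span {p, q}) : r ∉ Ideal.span {p} :=
    fun h' => h (Ideal.span_mono (by simp) h')
  have hzx1 : z ∉ Ideal.span {x} := hnotMem hz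
  have hzy1 : z ∉ Ideal.span {y} := hnotMem (q := x) (by rwa [Set.pair_comm])
  have hyz1 : y ∉ Ideal.span {z} := hnotMem hy'
  have hz0 : z ∉ Ideal.span {(0 : R)} := fun h' => hzx1 (by
    have h0 : z = 0 := by simpa using h'
    exact h0 ▸ zero_mem _)
  have hN (B C : ℕ) {r : R} (hr : x * r ∈ Ideal.span {y ^ B, z ^ C}) :
      r ∈ Ideal.span {y ^ B, z ^ C} := by
    induction B generalizing r with
    | zero =>
      have : Ideal.span {y ^ 0, z ^ C} = ⊤ := Ideal.eq_top_of_isUnit_mem _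
        (Ideal.subset_span (Set.mem_insert _ _)) (by simp)
      rw [this]
      trivial
    | succ B ih =>
      obtain ⟨s, t, hst⟩ := Ideal.mem_span_pair.1 hr
      have h1 : r ∈ Ideal.span {y, z ^ C} :=
        mem_span_pair_pow_of_mul_mem hy hyz hzy1 hx' C
          (Ideal.mem_span_pair.2 ⟨s * y ^ B, t, by rw [← hst]; ring⟩)
      obtain ⟨r₁, r₂, rfl⟩ := Ideal.mem_span_pair.1 h1
      have h2 : y * (x * r₁ - s * y ^ B) ∈ Ideal.span {0, z ^ C} :=
        Ideal.mem_span_pair.2 ⟨0, t - x * r₂, by linear_combination hst⟩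
      have h3 := mem_span_pair_pow_of_mul_mem
        (by rw [Ideal.span_singleton_eq_bot.2 rfl]; exact Ideal.isPrime_bot)
        (by rwa [Ideal.span_insert_zero]) hz0 (by rwa [Ideal.span_insert_zero]) C h2
      obtain ⟨_, m, hm⟩ := Ideal.mem_span_pair.1 h3
      obtain ⟨a, b, rfl⟩ := Ideal.mem_span_pair.1
        (ih (Ideal.mem_span_pair.2 ⟨s, m, by linear_combination hm⟩) : r₁ ∈ _)
      exact Ideal.mem_span_pair.2 ⟨a, r₂ + b * y, by ring⟩
  have hpow {J : Ideal R} {e : R} (hJ : ∀ r, e * r ∈ J → r ∈ J) (k : ℕ) (r : R)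
      (hr : e ^ k * r ∈ J) : r ∈ J := by
    induction k with
    | zero => simpa using hr
    | succ k ih => exact ih (hJ _ (by rwa [← mul_assoc, ← pow_succ']))
  intro hmem
  obtain ⟨α, w, hw, hα⟩ := Ideal.mem_span_insert.1 hmem
  have h1 : y ^ b * z ^ c - α * x ∈ Ideal.span {y ^ (b + 1), z ^ (c + 1)} :=
    hpow (fun r => hN _ _) a _ (by convert! hw using 1; linear_combination hα)
  obtain ⟨β, γ, hβ⟩ := Ideal.mem_span_pair.1 h1
  have h2 : z ^ c - β * y ∈ Ideal.span {x, z ^ (c + 1)} :=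
    hpow (fun r => mem_span_pair_pow_of_mul_mem hx hxz hzx1 hyxz _) b _
      (Ideal.mem_span_pair.2 ⟨α, γ, by linear_combination hβ⟩)
  obtain ⟨δ, ε, hδ⟩ := Ideal.mem_span_pair.1 h2
  have h3 : 1 - ε * z ∈ Ideal.span {x, y} :=
    hpow (fun r hr => (hxy.mem_or_mem hr).resolve_left hz) c _
      (Ideal.mem_span_pair.2 ⟨δ, β, by linear_combination hδ⟩)
  have h4 : (1 : R) ∈ maximalIdeal R := by
    rw [h, ← sub_add_cancel (1 : R) (ε * z)]
    exact add_mem (Ideal.span_mono (by grind) h3)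
      (Ideal.mul_mem_left _ _ (Ideal.subset_span (by simp)))
  exact (Ideal.ne_top_iff_one _).1 (maximalIdeal.isMaximal R).ne_top h4

/-- Exponents `((i, _), (j, k))` of the monomials of degree `d` in three variables. -/
def tripleIndex (d : ℕ) : Finset (Σ _ : ℕ × ℕ, ℕ × ℕ) :=
  (Finset.HasAntidiagonal.antidiagonal d).sigma fun p => Finset.HasAntidiagonal.antidiagonal p.2

theorem mem_tripleIndex {d : ℕ} {α : Σ _ : ℕ × ℕ, ℕ × ℕ} :
    α ∈ tripleIndex d ↔ α.1.1 + α.1.2 = d ∧ α.2.1 + α.2.2 = α.1.2 := by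
  simp [tripleIndex]

theorem card_tripleIndex (d : ℕ) : (tripleIndex d).card = (d + 2).choose 2 := by
  rw [tripleIndex, Finset.card_sigma]
  simp only [Finset.Nat.card_antidiagonal]
  rw [Finset.Nat.sum_antidiagonal_eq_sum_range_succ_mk, ← Finset.sum_range_reflect]
  have h : ∀ j ∈ Finset.range (d + 1), d - (d + 1 - 1 - j) + 1 = j + 1 := by
    intro j hj
    have := Finset.mem_range.1 hj
    omega
  rw [show d.succ = d + 1 from rfl, Finset.sum_congr rfl h, Nat.choose_two_right,
    ← Finset.sum_range_id, Finset.sum_range_succ' _ (d + 1)]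
  simp

/-- The monomial in `u, v, w` with a given exponent. -/
def tripleMonomial {R : Type*} [CommRing R] (u v w : R) (α : Σ _ : ℕ × ℕ, ℕ × ℕ) : R :=
  u ^ α.1.1 * v ^ α.2.1 * w ^ α.2.2

theorem span_triple_pow_le {R : Type*} [CommRing R] (u v w : R) (d : ℕ) :
    Ideal.span {u, v, w} ^ d ≤ Ideal.span (tripleMonomial u v w '' tripleIndex d) := by
  induction d with
  | zero =>
    have : (1 : R) ∈ Ideal.span (tripleMonomial u v w '' tripleIndex 0) :=
      Ideal.subset_span ⟨⟨(0, 0), (0, 0)⟩, by simp [mem_tripleIndex], by simp [tripleMonomial]⟩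
    rw [(Ideal.eq_top_iff_one _).2 this]
    exact le_top
  | succ d ih =>
    rw [pow_succ']
    refine (Ideal.mul_mono_right ih).trans ?_
    rw [Ideal.span_mul_span', Ideal.span_le]
    rintro _ ⟨t, ht, _, ⟨⟨⟨i, l⟩, ⟨j, k⟩⟩, hα, rfl⟩, rfl⟩
    rw [Finset.mem_coe, mem_tripleIndex] at hα
    apply Ideal.subset_span
    rcases ht with rfl | rfl | rfl
    · exact ⟨⟨(i + 1, l), (j, k)⟩, by simp [mem_tripleIndex]; grind,
        by simp [tripleMonomial]; ring⟩
    · exact ⟨⟨(i, l + 1), (j + 1, k)⟩, by simp [mem_tripleIndex]; grind,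
        by simp [tripleMonomial]; ring⟩
    · exact ⟨⟨(i, l + 1), (j, k + 1)⟩, by simp [mem_tripleIndex]; grind,
        by simp [tripleMonomial]; ring⟩

theorem tripleMonomial_mem_span_pow {R : Type*} [CommRing R] {I : Ideal R} {u v w : R}
    (hu : u ∈ I) (hv : v ∈ I) (hw : w ∈ I) {d : ℕ} {α} (hα : α ∈ tripleIndex d) :
    tripleMonomial u v w α ∈ I ^ d := by
  rw [mem_tripleIndex] at hα
  rw [← hα.1, ← hα.2, ← add_assoc, pow_add, pow_add]
  exact Ideal.mul_mem_mul (Ideal.mul_mem_mul (Ideal.pow_mem_pow hu _) (Ideal.pow_mem_pow hv _))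
    (Ideal.pow_mem_pow hw _)

theorem span_triple_pow_le_span_pow {R : Type*} [CommRing R] (x y z : R) {i j k N : ℕ}
    (hN : i + j + k < N) :
    Ideal.span {x, y, z} ^ N ≤ Ideal.span {x ^ (i + 1), y ^ (j + 1), z ^ (k + 1)} := by
  refine (span_triple_pow_le x y z N).trans (Ideal.span_le.2 ?_)
  rintro _ ⟨α, hα, rfl⟩
  rw [Finset.mem_coe, mem_tripleIndex] at hα
  by_cases h1 : i + 1 ≤ α.1.1
  · exact Ideal.mul_mem_right _ _ (Ideal.mul_mem_right _ _
      (Ideal.mem_of_dvd _ (pow_dvd_pow x h1) (Ideal.subset_span (by simp))))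
  by_cases h2 : j + 1 ≤ α.2.1
  · exact Ideal.mul_mem_right _ _ (Ideal.mul_mem_left _ _
      (Ideal.mem_of_dvd _ (pow_dvd_pow y h2) (Ideal.subset_span (by simp))))
  have h3 : k + 1 ≤ α.2.2 := by omega
  exact Ideal.mul_mem_left _ _
    (Ideal.mem_of_dvd _ (pow_dvd_pow z h3) (Ideal.subset_span (by simp)))

/-- Products respect congruence of leading forms in the `I`-adic filtration. -/
theorem mul_sub_mul_mem_pow {R : Type*} [CommRing R] {I : Ideal R} {p q : ℕ} {a a' b b' : R}
    (ha : a - a' ∈ I ^ (p + 1)) (ha' : a' ∈ I ^ p) (hb : b - b' ∈ I ^ (q + 1)) (hb' : b' ∈ I ^ q) :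
    a * b - a' * b' ∈ I ^ (p + q + 1) := by
  have hb2 : b ∈ I ^ q := by
    rw [← sub_add_cancel b b']
    exact add_mem (Ideal.pow_le_pow_right (Nat.le_succ q) hb) hb'
  have h1 := Ideal.mul_mem_mul ha hb2
  have h2 := Ideal.mul_mem_mul ha' hb
  rw [← pow_add] at h1 h2
  convert! add_mem (by convert! h1 using 2; ring : (a - a') * b ∈ I ^ (p + q + 1)) h2 using 1
  ring

theorem pow_sub_pow_mem_pow {R : Type*} [CommRing R] {I : Ideal R} {p : ℕ} {a a' : R}
    (ha : a - a' ∈ I ^ (p + 1)) (ha' : a' ∈ I ^ p) (k : ℕ) :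
    a ^ k - a' ^ k ∈ I ^ (p * k + 1) ∧ a' ^ k ∈ I ^ (p * k) := by
  refine ⟨?_, pow_mul I p k ▸ Ideal.pow_mem_pow ha' k⟩
  induction k with
  | zero => simp
  | succ k ih =>
    rw [pow_succ a, pow_succ a', Nat.mul_succ]
    exact mul_sub_mul_mem_pow ih (pow_mul I p k ▸ Ideal.pow_mem_pow ha' k) ha ha'

/-- Expansion of the monomials in the leading forms `z²`, `-yz`, `y² - xz`. -/
theorem tripleMonomial_leadingForms_eq_sum {R : Type*} [CommRing R] (x y z : R) (e : ℕ) (α) :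
    z ^ (3 * e) * tripleMonomial (z ^ 2) (-(y * z)) (y ^ 2 - x * z) α =
      ∑ i ∈ Finset.range (α.2.2 + 1), (-1) ^ (α.2.1 + (α.2.2 - i)) * (α.2.2.choose i : R) *
        (x ^ (α.2.2 - i) * y ^ (α.2.1 + 2 * i) *
          z ^ (3 * e + 2 * α.1.1 + α.2.1 + (α.2.2 - i))) := by
  rw [tripleMonomial, sub_eq_add_neg, add_pow, Finset.mul_sum, Finset.mul_sum]
  refine Finset.sum_congr rfl fun i _ => ?_
  rw [neg_pow (y * z), neg_pow (x * z)]
  ring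

theorem mul_tripleMonomial_sub_mem_pow {R : Type*} [CommRing R] {x y z D g₁ g₂ g₃ : R}
    (hD : D - z ^ 3 ∈ Ideal.span {x, y, z} ^ 4)
    (h₁ : g₁ - z ^ 2 ∈ Ideal.span {x, y, z} ^ 3)
    (h₂ : g₂ - -(y * z) ∈ Ideal.span {x, y, z} ^ 3)
    (h₃ : g₃ - (y ^ 2 - x * z) ∈ Ideal.span {x, y, z} ^ 3) {d : ℕ} (e : ℕ)
    {α} (hα : α ∈ tripleIndex d) :
    D ^ e * tripleMonomial g₁ g₂ g₃ α -
      z ^ (3 * e) * tripleMonomial (z ^ 2) (-(y * z)) (y ^ 2 - x * z) α ∈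
        Ideal.span {x, y, z} ^ (3 * e + 2 * d + 1) := by
  have hx : x ∈ Ideal.span {x, y, z} := Ideal.subset_span (by simp)
  have hy : y ∈ Ideal.span {x, y, z} := Ideal.subset_span (by simp)
  have hz : z ∈ Ideal.span {x, y, z} := Ideal.subset_span (by simp)
  have hmul {a b : R} (ha : a ∈ Ideal.span {x, y, z}) (hb : b ∈ Ideal.span {x, y, z}) :
      a * b ∈ Ideal.span {x, y, z} ^ 2 := pow_two (Ideal.span {x, y, z}) ▸ Ideal.mul_mem_mul ha hb
  obtain ⟨hD1, hD2⟩ := pow_sub_pow_mem_pow (p := 3) hD (Ideal.pow_mem_pow hz 3) e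
  obtain ⟨h11, h12⟩ := pow_sub_pow_mem_pow (p := 2) h₁ (Ideal.pow_mem_pow hz 2) α.1.1
  obtain ⟨h21, h22⟩ := pow_sub_pow_mem_pow (p := 2) h₂ (neg_mem (hmul hy hz)) α.2.1
  obtain ⟨h31, h32⟩ := pow_sub_pow_mem_pow (p := 2) h₃
    (sub_mem (Ideal.pow_mem_pow hy 2) (hmul hx hz)) α.2.2
  have hadd {p q : ℕ} {a b : R} (ha : a ∈ Ideal.span {x, y, z} ^ p)
      (hb : b ∈ Ideal.span {x, y, z} ^ q) : a * b ∈ Ideal.span {x, y, z} ^ (p + q) :=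
    pow_add (Ideal.span {x, y, z}) p q ▸ Ideal.mul_mem_mul ha hb
  have key := mul_sub_mul_mem_pow hD1 hD2
    (mul_sub_mul_mem_pow (mul_sub_mul_mem_pow h11 h12 h21 h22) (hadd h12 h22) h31 h32)
    (hadd (hadd h12 h22) h32)
  rw [mem_tripleIndex] at hα
  rw [← pow_mul z 3 e] at key
  convert! key using 2
  omega

/-- The leading forms of `D, g₁, g₂, g₃` satisfy no relations `∑ c_α D ^ e g ^ α = 0` with a
unit among the `c_α`. -/
theorem coeff_mem_of_sum_mem_pow {R : Type*} [CommRing R] [IsNoetherianRing R]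
    [IsLocalRing R] (hdim : ringKrullDim R = 3) {x y z : R}
    (h : maximalIdeal R = Ideal.span {x, y, z}) {D g₁ g₂ g₃ : R}
    (hD : D - z ^ 3 ∈ Ideal.span {x, y, z} ^ 4)
    (h₁ : g₁ - z ^ 2 ∈ Ideal.span {x, y, z} ^ 3)
    (h₂ : g₂ - -(y * z) ∈ Ideal.span {x, y, z} ^ 3)
    (h₃ : g₃ - (y ^ 2 - x * z) ∈ Ideal.span {x, y, z} ^ 3) {d e : ℕ}
    {c : (Σ _ : ℕ × ℕ, ℕ × ℕ) → R}
    (hc : ∑ α ∈ tripleIndex d, c α * (D ^ e * tripleMonomial g₁ g₂ g₃ α) ∈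
      Ideal.span {x, y, z} ^ (3 * e + 2 * d + 1)) :
    ∀ α ∈ tripleIndex d, c α ∈ Ideal.span {x, y, z} := by
  classical
  by_contra! hcon
  obtain ⟨β, hβ, hβc⟩ := hcon
  set f : (Σ _ : ℕ × ℕ, ℕ × ℕ) → R := fun α =>
    z ^ (3 * e) * tripleMonomial (z ^ 2) (-(y * z)) (y ^ 2 - x * z) α with hf
  have hsum : ∑ α ∈ tripleIndex d, c α * f α ∈ Ideal.span {x, y, z} ^ (3 * e + 2 * d + 1) := by
    have := Ideal.sum_mem (I := Ideal.span {x, y, z} ^ (3 * e + 2 * d + 1)) (t := tripleIndex d)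
      (f := fun α => c α * (D ^ e * tripleMonomial g₁ g₂ g₃ α - f α))
      fun α hα => Ideal.mul_mem_left _ _ (mul_tripleMonomial_sub_mem_pow hD h₁ h₂ h₃ e hα)
    simp only [mul_sub, Finset.sum_sub_distrib] at this
    convert! sub_mem hc this using 1
    ring
  obtain ⟨α, hα, hmax⟩ := Finset.exists_max_image
    ((tripleIndex d).filter fun α => c α ∉ Ideal.span {x, y, z}) (fun α => α.2.2)
    ⟨β, by simp [hβ, hβc]⟩
  rw [Finset.mem_filter] at hα
  obtain ⟨hα, hαc⟩ := hα
  set W := Ideal.span {x ^ (α.2.2 + 1), y ^ (α.2.1 + 1),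
    z ^ (3 * e + 2 * α.1.1 + α.2.1 + α.2.2 + 1)} with hW
  have hαd := mem_tripleIndex.1 hα
  have hle : Ideal.span {x, y, z} ^ (3 * e + 2 * d + 1) ≤ W :=
    span_triple_pow_le_span_pow x y z (by omega)
  have hterm (α') (hα' : α' ∈ tripleIndex d) (hk : α'.2.2 ≤ α.2.2) (i : ℕ) (hi : i ≤ α'.2.2)
      (hne : ¬ (α' = α ∧ i = 0)) :
      x ^ (α'.2.2 - i) * y ^ (α'.2.1 + 2 * i) *
          z ^ (3 * e + 2 * α'.1.1 + α'.2.1 + (α'.2.2 - i)) ∈ W := by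
    have hαd' := mem_tripleIndex.1 hα'
    by_cases hy : α.2.1 + 1 ≤ α'.2.1 + 2 * i
    · exact Ideal.mul_mem_right _ _ (Ideal.mul_mem_left _ _
        (Ideal.mem_of_dvd _ (pow_dvd_pow y hy) (Ideal.subset_span (by simp))))
    by_cases hz : 3 * e + 2 * α.1.1 + α.2.1 + α.2.2 + 1 ≤
        3 * e + 2 * α'.1.1 + α'.2.1 + (α'.2.2 - i)
    · exact Ideal.mul_mem_left _ _
        (Ideal.mem_of_dvd _ (pow_dvd_pow z hz) (Ideal.subset_span (by simp)))
    exfalso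
    apply hne
    obtain ⟨⟨a, l⟩, ⟨b, k⟩⟩ := α
    obtain ⟨⟨a', l'⟩, ⟨b', k'⟩⟩ := α'
    simp only at hαd hαd' hk hi hy hz
    have : a' = a ∧ l' = l ∧ b' = b ∧ k' = k ∧ i = 0 := by omega
    simp [this]
  have hrest (α') (hα' : α' ∈ tripleIndex d) (hne : α' ≠ α) : c α' * f α' ∈ W := by
    by_cases hc' : c α' ∈ Ideal.span {x, y, z}
    · refine hle ?_
      rw [show 3 * e + 2 * d + 1 = 1 + (3 * e + 2 * d) by ring, pow_add, pow_one]
      refine Ideal.mul_mem_mul hc' ?_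
      simp only [hf]
      rw [pow_add, pow_mul _ 2]
      have hx : x ∈ Ideal.span {x, y, z} := Ideal.subset_span (by simp)
      have hy : y ∈ Ideal.span {x, y, z} := Ideal.subset_span (by simp)
      have hz : z ∈ Ideal.span {x, y, z} := Ideal.subset_span (by simp)
      have hmul {a b : R} (ha : a ∈ Ideal.span {x, y, z}) (hb : b ∈ Ideal.span {x, y, z}) :
          a * b ∈ Ideal.span {x, y, z} ^ 2 :=
        pow_two (Ideal.span {x, y, z}) ▸ Ideal.mul_mem_mul ha hb
      exact Ideal.mul_mem_mul (Ideal.pow_mem_pow hz _) (tripleMonomial_mem_span_pow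
        (Ideal.pow_mem_pow hz 2) (neg_mem (hmul hy hz))
        (sub_mem (Ideal.pow_mem_pow hy 2) (hmul hx hz)) hα')
    · have hk := hmax α' (Finset.mem_filter.2 ⟨hα', hc'⟩)
      refine Ideal.mul_mem_left _ _ ?_
      simp only [hf, tripleMonomial_leadingForms_eq_sum]
      exact Ideal.sum_mem _ fun i hi => Ideal.mul_mem_left _ _
        (hterm α' hα' hk i (Nat.lt_succ_iff.1 (Finset.mem_range.1 hi)) fun h => hne h.1)
  have hfα : c α * f α ∈ W := by
    rw [← Finset.add_sum_erase _ _ hα] at hsum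
    exact (Ideal.add_mem_iff_left _ (Ideal.sum_mem _ fun α' hα' =>
      hrest α' (Finset.mem_of_mem_erase hα') (Finset.ne_of_mem_erase hα'))).1 (hle hsum)
  have hu : IsUnit (c α) := by
    rw [← h] at hαc
    simpa using hαc
  rw [Ideal.unit_mul_mem_iff_mem _ hu] at hfα
  simp only [hf, tripleMonomial_leadingForms_eq_sum] at hfα
  rw [Finset.sum_range_succ'] at hfα
  have hfα2 := (Ideal.add_mem_iff_right _ (Ideal.sum_mem _ fun i hi => Ideal.mul_mem_left _ _
    (hterm α hα le_rfl (i + 1) (Finset.mem_range.1 hi) (by simp)))).1 hfα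
  simp only [Nat.choose_zero_right, Nat.cast_one, mul_one, Nat.sub_zero, mul_zero,
    add_zero] at hfα2
  rw [Ideal.unit_mul_mem_iff_mem _ (isUnit_one.neg.pow _)] at hfα2
  exact monomial_notMem_span hdim x y z h _ _ _ hfα2

theorem length_quotient_maximalIdeal {R : Type*} [CommRing R] [IsLocalRing R] :
    Module.length R (R ⧸ maximalIdeal R) = 1 := by
  rw [Module.length_eq_one_iff, isSimpleModule_iff_isCoatom]
  exact Ideal.isMaximal_def.1 (maximalIdeal.isMaximal R)

/-- If `B` is generated over `A` by elements that form a basis of `B / A` over the residue field,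
then `B / A` has length the number of these elements. -/
theorem length_quotient_comap_eq_card {R ι : Type*} [CommRing R] [IsLocalRing R] {A B : Ideal R}
    {s : Finset ι} {w : ι → R} (hB : B = A ⊔ Ideal.span (w '' s))
    (hw : ∀ i ∈ s, ∀ t ∈ maximalIdeal R, t * w i ∈ A)
    (hA : ∀ c : ι → R, ∑ i ∈ s, c i * w i ∈ A → ∀ i ∈ s, c i ∈ maximalIdeal R) :
    Module.length R (B ⧸ Submodule.comap B.subtype A) = s.card := by
  classical
  have hwB (i : s) : w i ∈ B := hB ▸ Ideal.mem_sup_right (Ideal.subset_span ⟨i, i.2, rfl⟩)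
  let φ : (s → R) →ₗ[R] B ⧸ Submodule.comap B.subtype A :=
    Fintype.linearCombination R fun i : s => (Submodule.comap B.subtype A).mkQ ⟨w i, hwB i⟩
  have hφ (c : s → R) : φ c = (Submodule.comap B.subtype A).mkQ
      ⟨∑ i, c i * w i, Ideal.sum_mem _ fun i _ => B.mul_mem_left _ (hwB i)⟩ := by
    rw [Fintype.linearCombination_apply]
    simp only [← map_smul, ← map_sum]
    congr 1
    ext
    simp
  have hker : LinearMap.ker φ = Submodule.pi Set.univ fun _ : s => maximalIdeal R := by
    ext c
    rw [LinearMap.mem_ker, hφ, Submodule.mkQ_apply, Submodule.Quotient.mk_eq_zero,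
      Submodule.mem_comap, Submodule.mem_pi]
    change ∑ i, c i * w i ∈ A ↔ _
    constructor
    · intro hc i _
      have := hA (fun i => if hi : i ∈ s then c ⟨i, hi⟩ else 0) (by
        rw [← Finset.sum_coe_sort]
        simpa using hc) i i.2
      simpa using this
    · exact fun hc => Ideal.sum_mem _ fun i _ => hw i i.2 _ (hc i trivial)
  have hsurj : Function.Surjective φ := by
    intro b
    obtain ⟨⟨b, hb⟩, rfl⟩ := Submodule.mkQ_surjective _ b
    obtain ⟨a, ha, b', hb', rfl⟩ := Submodule.mem_sup.1 (hB ▸ hb)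
    rw [Set.image_eq_range] at hb'
    obtain ⟨c, hc⟩ := Ideal.mem_span_range_iff_exists_fun.1 hb'
    refine ⟨c, ?_⟩
    rw [hφ, Submodule.mkQ_apply, Submodule.mkQ_apply, Submodule.Quotient.eq, Submodule.mem_comap]
    change ∑ i, c i * w i - (a + b') ∈ A
    convert! A.neg_mem ha using 1
    rw [← hc]
    simp
  rw [← ((Submodule.quotEquivOfEq _ _ hker.symm).trans
    (φ.quotKerEquivOfSurjective hsurj)).length_eq, (Submodule.quotientPi _).length_eq,
    Module.length_pi]
  simp [length_quotient_maximalIdeal]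

theorem length_quotient_comap_add {R : Type*} [CommRing R] {A B C : Ideal R} (hAB : A ≤ B)
    (hBC : B ≤ C) :
    Module.length R (C ⧸ Submodule.comap C.subtype A) =
      Module.length R (B ⧸ Submodule.comap B.subtype A) +
        Module.length R (C ⧸ Submodule.comap C.subtype B) := by
  let f : (B ⧸ Submodule.comap B.subtype A) →ₗ[R] C ⧸ Submodule.comap C.subtype A :=
    Submodule.mapQ _ _ (Submodule.inclusion hBC) fun b hb => hb
  let g : (C ⧸ Submodule.comap C.subtype A) →ₗ[R] C ⧸ Submodule.comap C.subtype B :=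
    Submodule.factor (Submodule.comap_mono hAB)
  refine Module.length_eq_add_of_exact f g ?_ (Submodule.factor_surjective _) ?_
  · rw [← LinearMap.ker_eq_bot, LinearMap.ker_eq_bot']
    intro b hb
    obtain ⟨b, rfl⟩ := Submodule.mkQ_surjective _ b
    exact (Submodule.Quotient.mk_eq_zero _).2 ((Submodule.Quotient.mk_eq_zero _).1 hb :)
  · intro c
    obtain ⟨c, rfl⟩ := Submodule.mkQ_surjective _ c
    constructor
    · intro hc
      have hc' : c ∈ Submodule.comap C.subtype B := (Submodule.Quotient.mk_eq_zero _).1 hc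
      exact ⟨Submodule.mkQ _ ⟨c, hc'⟩, rfl⟩
    · rintro ⟨b, hb⟩
      obtain ⟨b, rfl⟩ := Submodule.mkQ_surjective _ b
      rw [← hb]
      exact (Submodule.Quotient.mk_eq_zero _).2 b.2

/-- The ideal of maximal minors of `((x, y, z), (y, z, x ^ 2))`. -/
abbrev curveIdeal {R : Type*} [CommRing R] (x y z : R) : Ideal R :=
  Ideal.span {z ^ 2 - x ^ 2 * y, x ^ 3 - y * z, y ^ 2 - x * z}

/-- The element of the second symbolic power of `curveIdeal x y z` that together with the square
generates it. -/
def curveDelta {R : Type*} [CommRing R] (x y z : R) : R :=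
  z ^ 3 + x * y ^ 3 - 3 * x ^ 2 * y * z + x ^ 5

/-- Partial sums `Iⁿ + Δ Iⁿ⁻² + ⋯ + Δʲ Iⁿ⁻²ʲ`. -/
def deltaFiltration {R : Type*} [CommRing R] (I : Ideal R) (D : R) (n : ℕ) : ℕ → Ideal R
  | 0 => I ^ n
  | j + 1 => deltaFiltration I D n j ⊔ Ideal.span {D ^ (j + 1)} * I ^ (n - 2 * (j + 1))

theorem span_pow_mul_le_deltaFiltration {R : Type*} [CommRing R] (I : Ideal R) (D : R) (n j : ℕ) :
    Ideal.span {D ^ j} * I ^ (n - 2 * j) ≤ deltaFiltration I D n j := by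
  cases j with
  | zero => simp [deltaFiltration]
  | succ j => exact le_sup_right

theorem pow_le_deltaFiltration {R : Type*} [CommRing R] (I : Ideal R) (D : R) (n j : ℕ) :
    I ^ n ≤ deltaFiltration I D n j := by
  induction j with
  | zero => exact le_rfl
  | succ j ih => exact ih.trans le_sup_left

theorem deltaFiltration_le_iff {R : Type*} [CommRing R] {I J : Ideal R} {D : R} {n j : ℕ} :
    deltaFiltration I D n j ≤ J ↔ ∀ i ≤ j, Ideal.span {D ^ i} * I ^ (n - 2 * i) ≤ J := by
  induction j with
  | zero => simp [deltaFiltration]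
  | succ j ih =>
    rw [deltaFiltration, sup_le_iff, ih]
    constructor
    · rintro ⟨h1, h2⟩ i hi
      rcases Nat.le_succ_iff.1 hi with h | rfl
      · exact h1 i h
      · exact h2
    · exact fun h => ⟨fun i hi => h i (hi.trans (Nat.le_succ j)), h _ le_rfl⟩

section
variable {R : Type*} [CommRing R] (x y z : R)

theorem curveIdeal_le_sq : curveIdeal x y z ≤ Ideal.span {x, y, z} ^ 2 := by
  have hx : x ∈ Ideal.span {x, y, z} := Ideal.subset_span (by simp)
  have hy : y ∈ Ideal.span {x, y, z} := Ideal.subset_span (by simp)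
  have hz : z ∈ Ideal.span {x, y, z} := Ideal.subset_span (by simp)
  rw [curveIdeal, Ideal.span_le]
  rintro _ (rfl | rfl | rfl) <;> rw [SetLike.mem_coe, pow_two (Ideal.span _)]
  · convert! sub_mem (Ideal.mul_mem_mul hz hz)
      (Ideal.mul_mem_mul hx (Ideal.mul_mem_left _ x hy)) using 1; ring
  · convert! sub_mem (Ideal.mul_mem_mul hx (Ideal.mul_mem_left _ x hx))
      (Ideal.mul_mem_mul hy hz) using 1; ring
  · convert! sub_mem (Ideal.mul_mem_mul hy hy) (Ideal.mul_mem_mul hx hz) using 1; ring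

theorem mul_curveDelta_mem {t : R} (ht : t ∈ Ideal.span {x, y, z}) :
    t * curveDelta x y z ∈ curveIdeal x y z ^ 2 := by
  have h1 : z ^ 2 - x ^ 2 * y ∈ curveIdeal x y z := Ideal.subset_span (by simp)
  have h2 : x ^ 3 - y * z ∈ curveIdeal x y z := Ideal.subset_span (by simp)
  have h3 : y ^ 2 - x * z ∈ curveIdeal x y z := Ideal.subset_span (by simp)
  suffices h : Ideal.span {x, y, z} ≤
      Submodule.colon (curveIdeal x y z ^ 2) {curveDelta x y z} by
    simpa [Submodule.mem_colon_singleton] using h ht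
  rw [Ideal.span_le]
  rintro _ (rfl | rfl | rfl) <;>
    rw [SetLike.mem_coe, Submodule.mem_colon_singleton, smul_eq_mul, pow_two (curveIdeal _ _ _)]
  · convert! sub_mem (Ideal.mul_mem_mul h2 h2) (Ideal.mul_mem_mul h1 h3) using 1
    rw [curveDelta]; ring
  · convert! sub_mem (Ideal.mul_mem_left _ x (Ideal.mul_mem_mul h3 h3))
      (Ideal.mul_mem_mul h1 h2) using 1
    rw [curveDelta]; ring
  · convert! sub_mem (Ideal.mul_mem_mul h1 h1)
      (Ideal.mul_mem_left _ x (Ideal.mul_mem_mul h2 h3)) using 1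
    rw [curveDelta]; ring

end

section
variable {R : Type*} [CommRing R] {x y z : R}

theorem curveDelta_sub_mem : curveDelta x y z - z ^ 3 ∈ Ideal.span {x, y, z} ^ 4 := by
  have hx : x ∈ Ideal.span {x, y, z} := Ideal.subset_span (by simp)
  have hy : y ∈ Ideal.span {x, y, z} := Ideal.subset_span (by simp)
  have hz : z ∈ Ideal.span {x, y, z} := Ideal.subset_span (by simp)
  have h1 := Ideal.mul_mem_mul (Ideal.pow_mem_pow hx 1) (Ideal.pow_mem_pow hy 3)
  have h2 := Ideal.mul_mem_mul (Ideal.mul_mem_mul (Ideal.pow_mem_pow hx 2)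
    (Ideal.pow_mem_pow hy 1)) (Ideal.pow_mem_pow hz 1)
  simp only [← pow_add] at h1 h2
  convert! add_mem (sub_mem h1 (Ideal.mul_mem_left _ 3 h2))
    (Ideal.mul_mem_left _ x (Ideal.pow_mem_pow hx 4)) using 1
  rw [curveDelta]; ring

theorem curveDelta_mem_pow : curveDelta x y z ∈ Ideal.span {x, y, z} ^ 3 := by
  rw [← sub_add_cancel (curveDelta x y z) (z ^ 3)]
  exact add_mem (Ideal.pow_le_pow_right (by norm_num) curveDelta_sub_mem)
    (Ideal.pow_mem_pow (Ideal.subset_span (by simp)) 3)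

theorem deltaFiltration_le_pow {n j : ℕ} (hj : 2 * j ≤ n) :
    deltaFiltration (curveIdeal x y z) (curveDelta x y z) n j ≤
      Ideal.span {x, y, z} ^ (2 * n - j) := by
  rw [deltaFiltration_le_iff]
  intro i hi
  refine (Ideal.mul_mono ((Ideal.span_singleton_le_iff_mem _).2
    (Ideal.pow_mem_pow curveDelta_mem_pow i)) (Ideal.pow_right_mono (curveIdeal_le_sq x y z)
    (n - 2 * i))).trans ?_
  rw [← pow_mul, ← pow_mul, ← pow_add]
  exact Ideal.pow_le_pow_right (by omega)

theorem length_deltaFiltration_succ [IsNoetherianRing R] [IsLocalRing R]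
    (hdim : ringKrullDim R = 3) (h : maximalIdeal R = Ideal.span {x, y, z}) {n j : ℕ}
    (hj : 2 * (j + 1) ≤ n) :
    Module.length R (deltaFiltration (curveIdeal x y z) (curveDelta x y z) n (j + 1) ⧸
      Submodule.comap
        (deltaFiltration (curveIdeal x y z) (curveDelta x y z) n (j + 1)).subtype
        (deltaFiltration (curveIdeal x y z) (curveDelta x y z) n j)) =
      ((n - 2 * (j + 1) + 2).choose 2 : ℕ) := by
  have hx : x ∈ Ideal.span {x, y, z} := Ideal.subset_span (by simp)
  have hg1 : z ^ 2 - x ^ 2 * y ∈ curveIdeal x y z := Ideal.subset_span (by simp)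
  have hg2 : x ^ 3 - y * z ∈ curveIdeal x y z := Ideal.subset_span (by simp)
  have hg3 : y ^ 2 - x * z ∈ curveIdeal x y z := Ideal.subset_span (by simp)
  have hmem {α} (hα : α ∈ tripleIndex (n - 2 * (j + 1))) :=
    tripleMonomial_mem_span_pow hg1 hg2 hg3 hα
  rw [← card_tripleIndex]
  refine length_quotient_comap_eq_card (w := fun α => curveDelta x y z ^ (j + 1) *
    tripleMonomial (z ^ 2 - x ^ 2 * y) (x ^ 3 - y * z) (y ^ 2 - x * z) α) ?_ ?_ ?_
  · rw [deltaFiltration]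
    apply le_antisymm
    · refine sup_le_sup_left ?_ _
      refine (Ideal.mul_mono_right (span_triple_pow_le _ _ _ _)).trans ?_
      rw [Ideal.span_mul_span', Set.singleton_mul, Set.image_image]
    · refine sup_le_sup_left (Ideal.span_le.2 ?_) _
      rintro _ ⟨α, hα, rfl⟩
      exact Ideal.mul_mem_mul (Ideal.mem_span_singleton_self _) (hmem hα)
  · intro α hα t ht
    rw [h] at ht
    refine span_pow_mul_le_deltaFiltration _ _ _ _ ?_
    have h1 := Ideal.mul_mem_mul (Ideal.mem_span_singleton_self (curveDelta x y z ^ j))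
      (Ideal.mul_mem_mul (mul_curveDelta_mem x y z ht) (hmem hα))
    rw [← pow_add, show 2 + (n - 2 * (j + 1)) = n - 2 * j by omega] at h1
    convert! h1 using 1
    ring
  · intro c hc
    rw [h]
    refine coeff_mem_of_sum_mem_pow hdim h (e := j + 1) curveDelta_sub_mem ?_ ?_ ?_
      (Ideal.pow_le_pow_right (by omega) (deltaFiltration_le_pow (by omega) hc))
    · rw [show z ^ 2 - x ^ 2 * y - z ^ 2 = -y * x ^ 2 by ring, pow_succ' (Ideal.span _)]
      exact Ideal.mul_mem_mul (neg_mem (Ideal.subset_span (by simp))) (Ideal.pow_mem_pow hx 2)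
    · rw [show x ^ 3 - y * z - -(y * z) = x ^ 3 by ring]
      exact Ideal.pow_mem_pow hx 3
    · rw [sub_self]
      exact zero_mem _

theorem length_deltaFiltration [IsNoetherianRing R] [IsLocalRing R]
    (hdim : ringKrullDim R = 3) (h : maximalIdeal R = Ideal.span {x, y, z}) {n j : ℕ}
    (hj : 2 * j ≤ n) :
    Module.length R (deltaFiltration (curveIdeal x y z) (curveDelta x y z) n j ⧸
      Submodule.comap (deltaFiltration (curveIdeal x y z) (curveDelta x y z) n j).subtype
        (curveIdeal x y z ^ n)) =
      (∑ i ∈ Finset.range j, (n - 2 * (i + 1) + 2).choose 2 : ℕ) := by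
  induction j with
  | zero =>
    rw [Finset.sum_range_zero, Nat.cast_zero, Module.length_eq_zero_iff,
      Submodule.Quotient.subsingleton_iff]
    exact Submodule.comap_subtype_self _
  | succ j ih =>
    rw [length_quotient_comap_add (pow_le_deltaFiltration _ _ n j) le_sup_left, ih (by omega),
      length_deltaFiltration_succ hdim h hj, Finset.sum_range_succ]
    push_cast
    rfl

end

/-- Explicit description of the even symbolic powers `I⁽²ᵏ⁾` of `curveIdeal x y z`. -/
def evenSymbolicModel {R : Type*} [CommRing R] (x y z : R) : ℕ → Ideal R
  | 0 => ⊤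
  | k + 1 => Ideal.span {curveDelta x y z ^ (k + 1)} ⊔ Ideal.span {y ^ 2 - x * z} *
      (Ideal.span {curveDelta x y z ^ k * (z ^ 2 - x ^ 2 * y),
        curveDelta x y z ^ k * (x ^ 3 - y * z)} ⊔
          Ideal.span {y ^ 2 - x * z} * evenSymbolicModel x y z k)

/-- Explicit description of the odd symbolic powers `I⁽²ᵏ⁺¹⁾` of `curveIdeal x y z`. -/
def oddSymbolicModel {R : Type*} [CommRing R] (x y z : R) (k : ℕ) : Ideal R :=
  Ideal.span {curveDelta x y z ^ k * (z ^ 2 - x ^ 2 * y),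
    curveDelta x y z ^ k * (x ^ 3 - y * z)} ⊔
      Ideal.span {y ^ 2 - x * z} * evenSymbolicModel x y z k

section
variable {R : Type*} [CommRing R] {x y z : R}

theorem mem_evenSymbolicModel_succ {k : ℕ} {r : R} :
    r ∈ evenSymbolicModel x y z (k + 1) ↔ ∃ a, ∃ s ∈ oddSymbolicModel x y z k,
      r = a * curveDelta x y z ^ (k + 1) + (y ^ 2 - x * z) * s := by
  rw [show evenSymbolicModel x y z (k + 1) = Ideal.span {curveDelta x y z ^ (k + 1)} ⊔
    Ideal.span {y ^ 2 - x * z} * oddSymbolicModel x y z k from rfl, Submodule.mem_sup]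
  simp only [Ideal.mem_span_singleton', Ideal.mem_span_singleton_mul]
  grind

theorem mem_oddSymbolicModel {k : ℕ} {r : R} :
    r ∈ oddSymbolicModel x y z k ↔ ∃ a b, ∃ s ∈ evenSymbolicModel x y z k,
      r = curveDelta x y z ^ k * (a * (z ^ 2 - x ^ 2 * y) + b * (x ^ 3 - y * z)) +
        (y ^ 2 - x * z) * s := by
  rw [oddSymbolicModel, Submodule.mem_sup]
  simp only [Ideal.mem_span_pair, Ideal.mem_span_singleton_mul]
  constructor
  · rintro ⟨_, ⟨a, b, rfl⟩, _, ⟨s, hs, rfl⟩, rfl⟩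
    exact ⟨a, b, s, hs, by ring⟩
  · rintro ⟨a, b, s, hs, rfl⟩
    exact ⟨_, ⟨a, b, rfl⟩, _, ⟨s, hs, rfl⟩, by ring⟩

theorem curveDelta_pow_mem_evenSymbolicModel (k : ℕ) :
    curveDelta x y z ^ k ∈ evenSymbolicModel x y z k := by
  cases k with
  | zero => trivial
  | succ k => exact mem_evenSymbolicModel_succ.2 ⟨1, 0, zero_mem _, by ring⟩

theorem curveDelta_pow_succ_mem_oddSymbolicModel (k : ℕ) :
    curveDelta x y z ^ (k + 1) ∈ oddSymbolicModel x y z k :=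
  mem_oddSymbolicModel.2 ⟨z, x ^ 2, x * y * curveDelta x y z ^ k,
    Ideal.mul_mem_left _ _ (curveDelta_pow_mem_evenSymbolicModel k), by
      rw [pow_succ]; simp only [curveDelta]; ring⟩

theorem mem_span_pair_sq_of_pow_mul_mem (hx : (Ideal.span {x}).IsPrime)
    (hxy : (Ideal.span {x, y}).IsPrime) (hy : y ∉ Ideal.span {x}) (hz : z ∉ Ideal.span {x, y})
    (k : ℕ) {a : R} (h : z ^ k * a ∈ Ideal.span {x, y ^ 2}) : a ∈ Ideal.span {x, y ^ 2} := by
  induction k with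
  | zero => simpa using h
  | succ k ih =>
    exact ih (mem_span_pair_pow_of_mul_mem hx hxy hy hz 2 (by rwa [← mul_assoc, ← pow_succ']))

theorem curveDelta_pow_sub_mem (k : ℕ) :
    curveDelta x y z ^ k - z ^ (3 * k) ∈ Ideal.span {x, y ^ 2} := by
  rw [pow_mul]
  refine Ideal.mem_of_dvd _ (sub_dvd_pow_sub_pow _ _ k)
    (Ideal.mem_of_dvd _ ?_ (Ideal.subset_span (Set.mem_insert _ _)))
  exact ⟨y ^ 3 - 3 * x * y * z + x ^ 4, by rw [curveDelta]; ring⟩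

/-- Division by `x` in the even model ideals, given it in the preceding odd one. -/
theorem mem_evenSymbolicModel_succ_of_mul_mem [IsDomain R] (hx0 : x ≠ 0)
    (hx : (Ideal.span {x}).IsPrime) (hxy : (Ideal.span {x, y}).IsPrime)
    (hy : y ∉ Ideal.span {x}) (hz : z ∉ Ideal.span {x, y}) {k : ℕ}
    (ih : ∀ r, x * r ∈ oddSymbolicModel x y z k → r ∈ oddSymbolicModel x y z k) {r : R}
    (hr : x * r ∈ evenSymbolicModel x y z (k + 1)) : r ∈ evenSymbolicModel x y z (k + 1) := by
  obtain ⟨a, s, hs, hrs⟩ := mem_evenSymbolicModel_succ.1 hr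
  have ha : a ∈ Ideal.span {x, y ^ 2} := by
    refine mem_span_pair_sq_of_pow_mul_mem hx hxy hy hz (3 * (k + 1)) ?_
    obtain ⟨u, v, huv⟩ := Ideal.mem_span_pair.1
      (curveDelta_pow_sub_mem (x := x) (y := y) (z := z) (k + 1))
    exact Ideal.mem_span_pair.2 ⟨r + z * s - a * u, -s - a * v, by
      linear_combination hrs - a * huv⟩
  obtain ⟨p, q, rfl⟩ := Ideal.mem_span_pair.1 ha
  have ht : s + q * curveDelta x y z ^ (k + 1) ∈ oddSymbolicModel x y z k :=
    add_mem hs (Ideal.mul_mem_left _ _ (curveDelta_pow_succ_mem_oddSymbolicModel k))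
  have hst : x * (r - (p + q * z) * curveDelta x y z ^ (k + 1)) =
      (y ^ 2 - x * z) * (s + q * curveDelta x y z ^ (k + 1)) := by linear_combination hrs
  generalize s + q * curveDelta x y z ^ (k + 1) = t at ht hst
  have htx : t ∈ Ideal.span {x} := by
    refine (hx.mem_or_mem (Ideal.mem_span_singleton'.2
      ⟨r - (p + q * z) * curveDelta x y z ^ (k + 1) + z * t, ?_⟩ :
      y ^ 2 * t ∈ _)).resolve_left fun h => hy (hx.mem_of_pow_mem _ h)
    linear_combination hst
  obtain ⟨w, rfl⟩ := Ideal.mem_span_singleton'.1 htx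
  refine mem_evenSymbolicModel_succ.2 ⟨p + q * z, w, ih w (by rwa [mul_comm]), ?_⟩
  apply mul_left_cancel₀ hx0
  linear_combination hst

/-- Division by `x` in the odd model ideals, given it in the preceding even one. -/
theorem mem_oddSymbolicModel_of_mul_mem [IsDomain R] (hx0 : x ≠ 0)
    (hx : (Ideal.span {x}).IsPrime) (hxy : (Ideal.span {x, y}).IsPrime)
    (hy : y ∉ Ideal.span {x}) (hz : z ∉ Ideal.span {x, y}) {k : ℕ}
    (ih : ∀ r, x * r ∈ evenSymbolicModel x y z k → r ∈ evenSymbolicModel x y z k) {r : R}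
    (hr : x * r ∈ oddSymbolicModel x y z k) : r ∈ oddSymbolicModel x y z k := by
  obtain ⟨a, b, s, hs, hrs⟩ := mem_oddSymbolicModel.1 hr
  have hab : a * z - b * y ∈ Ideal.span {x, y ^ 2} := by
    refine mem_span_pair_sq_of_pow_mul_mem hx hxy hy hz (3 * k + 1) ?_
    obtain ⟨u, v, huv⟩ := Ideal.mem_span_pair.1
      (curveDelta_pow_sub_mem (x := x) (y := y) (z := z) k)
    refine Ideal.mem_span_pair.2 ⟨r + z * s + curveDelta x y z ^ k * (a * x * y - b * x ^ 2)
      - z * (a * z - b * y) * u, -s - z * (a * z - b * y) * v, ?_⟩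
    rw [pow_succ]
    linear_combination hrs - z * (a * z - b * y) * huv
  obtain ⟨u, v, huv⟩ := Ideal.mem_span_pair.1 hab
  obtain ⟨a₀, a₁, rfl⟩ := Ideal.mem_span_pair.1 ((hxy.mem_or_mem (Ideal.mem_span_pair.2
    ⟨u, v * y + b, by linear_combination huv⟩ : a * z ∈ _)).resolve_right hz)
  obtain ⟨w, hw⟩ := Ideal.mem_span_singleton'.1 ((hx.mem_or_mem (Ideal.mem_span_singleton'.2
    ⟨u - a₀ * z, by linear_combination huv⟩ :
      y * (a₁ * z - b - v * y) ∈ Ideal.span {x})).resolve_left hy)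
  obtain rfl : b = a₁ * z - v * y - w * x := by linear_combination hw
  set D := curveDelta x y z ^ k with hD
  have ht : s - D * (a₁ * x ^ 2 - v * z) ∈ evenSymbolicModel x y z k :=
    sub_mem hs (Ideal.mul_mem_right _ _ (curveDelta_pow_mem_evenSymbolicModel k))
  have hst : x * (r - D * ((a₀ + v) * (z ^ 2 - x ^ 2 * y) - w * (x ^ 3 - y * z))) =
      (y ^ 2 - x * z) * (s - D * (a₁ * x ^ 2 - v * z)) := by
    linear_combination hrs
  generalize s - D * (a₁ * x ^ 2 - v * z) = t at ht hst
  have htx : t ∈ Ideal.span {x} := by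
    refine (hx.mem_or_mem (Ideal.mem_span_singleton'.2
      ⟨r - D * ((a₀ + v) * (z ^ 2 - x ^ 2 * y) - w * (x ^ 3 - y * z)) + z * t, ?_⟩ :
      y ^ 2 * t ∈ _)).resolve_left fun h => hy (hx.mem_of_pow_mem _ h)
    linear_combination hst
  obtain ⟨t, rfl⟩ := Ideal.mem_span_singleton'.1 htx
  refine mem_oddSymbolicModel.2 ⟨a₀ + v, -w, t, ih t (by rwa [mul_comm]), ?_⟩
  apply mul_left_cancel₀ hx0
  linear_combination hst

/-- `x` is a nonzerodivisor modulo the model ideals. -/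
theorem mem_symbolicModel_of_mul_mem [IsDomain R] (hx0 : x ≠ 0)
    (hx : (Ideal.span {x}).IsPrime) (hxy : (Ideal.span {x, y}).IsPrime)
    (hy : y ∉ Ideal.span {x}) (hz : z ∉ Ideal.span {x, y}) (k : ℕ) :
    (∀ r, x * r ∈ evenSymbolicModel x y z k → r ∈ evenSymbolicModel x y z k) ∧
      ∀ r, x * r ∈ oddSymbolicModel x y z k → r ∈ oddSymbolicModel x y z k := by
  have h k (ih : ∀ r, x * r ∈ evenSymbolicModel x y z k → r ∈ evenSymbolicModel x y z k) r
      (hr : x * r ∈ oddSymbolicModel x y z k) : r ∈ oddSymbolicModel x y z k :=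
    mem_oddSymbolicModel_of_mul_mem hx0 hx hxy hy hz ih hr
  have h' : ∀ r, x * r ∈ evenSymbolicModel x y z k → r ∈ evenSymbolicModel x y z k := by
    induction k with
    | zero => exact fun r _ => trivial
    | succ k ih =>
      exact fun r hr => mem_evenSymbolicModel_succ_of_mul_mem hx0 hx hxy hy hz (h k ih) hr
  exact ⟨h', h k h'⟩

theorem mul_mem_evenSymbolicModel_succ {k : ℕ}
    (ih : ∀ g ∈ curveIdeal x y z, ∀ s ∈ evenSymbolicModel x y z k,
      g * s ∈ oddSymbolicModel x y z k) {g s : R} (hg : g ∈ curveIdeal x y z)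
    (hs : s ∈ oddSymbolicModel x y z k) : g * s ∈ evenSymbolicModel x y z (k + 1) := by
  have hpq {p q : R} : p * (z ^ 2 - x ^ 2 * y) + q * (x ^ 3 - y * z) ∈ curveIdeal x y z :=
    add_mem (Ideal.mul_mem_left _ _ (Ideal.subset_span (by simp)))
      (Ideal.mul_mem_left _ _ (Ideal.subset_span (by simp)))
  obtain ⟨p, q, t, rfl⟩ := Submodule.mem_span_triple.1 hg
  obtain ⟨a, b, s', hs', rfl⟩ := mem_oddSymbolicModel.1 hs
  refine mem_evenSymbolicModel_succ.2 ⟨p * a * z - (p * b + q * a) * y + q * b * x, _,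
    add_mem (add_mem (mem_oddSymbolicModel.2 ⟨q * b, p * a * x,
      (p * b + q * a) * x * curveDelta x y z ^ k,
      Ideal.mul_mem_left _ _ (curveDelta_pow_mem_evenSymbolicModel k), rfl⟩)
      (Ideal.mul_mem_left _ t hs)) (ih _ (hpq (p := p) (q := q)) _ hs'), ?_⟩
  have hD : curveDelta x y z = z ^ 3 + x * y ^ 3 - 3 * x ^ 2 * y * z + x ^ 5 := rfl
  simp only [smul_eq_mul]
  linear_combination
    -(curveDelta x y z ^ k * (p * a * z - (p * b + q * a) * y + q * b * x)) * hD

theorem mul_mem_oddSymbolicModel {k : ℕ} {g s : R} (hg : g ∈ curveIdeal x y z)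
    (hs : s ∈ evenSymbolicModel x y z k) : g * s ∈ oddSymbolicModel x y z k := by
  induction k generalizing g s with
  | zero =>
    obtain ⟨p, q, t, rfl⟩ := Submodule.mem_span_triple.1 hg
    exact mem_oddSymbolicModel.2 ⟨p * s, q * s, t * s, trivial, by
      simp only [smul_eq_mul]; ring⟩
  | succ k ih =>
    obtain ⟨a, s, hs', rfl⟩ := mem_evenSymbolicModel_succ.1 hs
    have hgs := mul_mem_evenSymbolicModel_succ (fun g hg s hs => ih hg hs) hg hs'
    obtain ⟨p, q, t, rfl⟩ := Submodule.mem_span_triple.1 hg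
    exact mem_oddSymbolicModel.2 ⟨a * p, a * q, _, add_mem
      (Ideal.mul_mem_left _ (a * t) (curveDelta_pow_mem_evenSymbolicModel (k + 1))) hgs, by
        simp only [smul_eq_mul]; ring⟩

theorem pow_le_symbolicModel (k : ℕ) :
    curveIdeal x y z ^ (2 * k) ≤ evenSymbolicModel x y z k ∧
      curveIdeal x y z ^ (2 * k + 1) ≤ oddSymbolicModel x y z k := by
  have h k (ih : curveIdeal x y z ^ (2 * k) ≤ evenSymbolicModel x y z k) :
      curveIdeal x y z ^ (2 * k + 1) ≤ oddSymbolicModel x y z k := by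
    rw [pow_succ', Ideal.mul_le]
    exact fun g hg s hs => mul_mem_oddSymbolicModel hg (ih hs)
  have h' : curveIdeal x y z ^ (2 * k) ≤ evenSymbolicModel x y z k := by
    induction k with
    | zero => exact le_top
    | succ k ih =>
      rw [show 2 * (k + 1) = 2 * k + 1 + 1 by ring, pow_succ', Ideal.mul_le]
      exact fun g hg s hs => mul_mem_evenSymbolicModel_succ
        (fun g hg s hs => mul_mem_oddSymbolicModel hg hs) hg (h k ih hs)
  exact ⟨h', h k h'⟩

theorem mul_mem_deltaFiltration {I : Ideal R} {D g s : R} {n j : ℕ} (hj : 2 * j ≤ n)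
    (hg : g ∈ I) (hs : s ∈ deltaFiltration I D n j) : g * s ∈ deltaFiltration I D (n + 1) j := by
  suffices h : deltaFiltration I D n j ≤ Submodule.colon (deltaFiltration I D (n + 1) j) {g} by
    simpa [Submodule.mem_colon_singleton, mul_comm g] using h hs
  rw [deltaFiltration_le_iff]
  intro i hi r hr
  rw [Submodule.mem_colon_singleton, smul_eq_mul]
  refine deltaFiltration_le_iff.1 le_rfl i hi ?_
  rw [show n + 1 - 2 * i = n - 2 * i + 1 by omega, pow_succ, ← mul_assoc]
  exact Ideal.mul_mem_mul hr hg

theorem pow_mul_mem_deltaFiltration {I : Ideal R} {D s : R} {n j : ℕ}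
    (hs : s ∈ I ^ (n - 2 * j)) : D ^ j * s ∈ deltaFiltration I D n j :=
  span_pow_mul_le_deltaFiltration _ _ _ _
    (Ideal.mul_mem_mul (Ideal.mem_span_singleton_self _) hs)

theorem symbolicModel_le_deltaFiltration (k : ℕ) :
    evenSymbolicModel x y z k ≤
      deltaFiltration (curveIdeal x y z) (curveDelta x y z) (2 * k) k ∧
    oddSymbolicModel x y z k ≤
      deltaFiltration (curveIdeal x y z) (curveDelta x y z) (2 * k + 1) k := by
  have hg1 : z ^ 2 - x ^ 2 * y ∈ curveIdeal x y z := Ideal.subset_span (by simp)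
  have hg2 : x ^ 3 - y * z ∈ curveIdeal x y z := Ideal.subset_span (by simp)
  have hg3 : y ^ 2 - x * z ∈ curveIdeal x y z := Ideal.subset_span (by simp)
  have h k (ih : evenSymbolicModel x y z k ≤
      deltaFiltration (curveIdeal x y z) (curveDelta x y z) (2 * k) k) :
      oddSymbolicModel x y z k ≤
        deltaFiltration (curveIdeal x y z) (curveDelta x y z) (2 * k + 1) k := by
    intro r hr
    obtain ⟨a, b, s, hs, rfl⟩ := mem_oddSymbolicModel.1 hr
    refine add_mem (pow_mul_mem_deltaFiltration ?_) (mul_mem_deltaFiltration le_rfl hg3 (ih hs))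
    rw [Nat.add_sub_cancel_left, pow_one]
    exact add_mem (Ideal.mul_mem_left _ _ hg1) (Ideal.mul_mem_left _ _ hg2)
  have h' : evenSymbolicModel x y z k ≤
      deltaFiltration (curveIdeal x y z) (curveDelta x y z) (2 * k) k := by
    induction k with
    | zero => simp [deltaFiltration]
    | succ k ih =>
      intro r hr
      obtain ⟨a, s, hs, rfl⟩ := mem_evenSymbolicModel_succ.1 hr
      refine add_mem (mul_comm a _ ▸ pow_mul_mem_deltaFiltration (by simp)) ?_
      exact (le_sup_left : deltaFiltration _ _ (2 * k + 1 + 1) k ≤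
        deltaFiltration _ _ (2 * (k + 1)) (k + 1))
          (mul_mem_deltaFiltration (by omega) hg3 (h k ih hs))
  exact ⟨h', h k h'⟩

theorem oddSymbolicModel_zero_le : oddSymbolicModel x y z 0 ≤ curveIdeal x y z := by
  have h := (symbolicModel_le_deltaFiltration (x := x) (y := y) (z := z) 0).2
  rwa [deltaFiltration, mul_zero, zero_add, pow_one] at h

theorem pow_mul_mem_pow_of_mem_deltaFiltration {n j : ℕ} (hj : 2 * j ≤ n) {r : R}
    (hr : r ∈ deltaFiltration (curveIdeal x y z) (curveDelta x y z) n j) :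
    x ^ j * r ∈ curveIdeal x y z ^ n := by
  suffices h : deltaFiltration (curveIdeal x y z) (curveDelta x y z) n j ≤
      Submodule.colon (curveIdeal x y z ^ n) {x ^ j} by
    simpa [Submodule.mem_colon_singleton, mul_comm (x ^ j)] using h hr
  rw [deltaFiltration_le_iff]
  intro i hi
  rw [Ideal.span_singleton_mul_le_iff]
  intro s hs
  rw [Submodule.mem_colon_singleton, smul_eq_mul]
  have h1 := Ideal.mul_mem_mul (Ideal.pow_mem_pow (mul_curveDelta_mem x y z
    (Ideal.subset_span (by simp) : x ∈ _)) i) hs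
  rw [← pow_mul, ← pow_add, show 2 * i + (n - 2 * i) = n by omega] at h1
  convert! Ideal.mul_mem_left _ (x ^ (j - i)) h1 using 1
  rw [← pow_sub_mul_pow x hi]
  ring

end

/-- In a Noetherian local ring, if `x` is a parameter modulo `I`, a prime over `I` that avoids `x`
is minimal over `I`. -/
theorem mem_minimalPrimes_of_notMem {R : Type*} [CommRing R] [IsNoetherianRing R]
    [IsLocalRing R] {I : Ideal R} {x : R} (hx : x ∈ maximalIdeal R)
    (hIx : ∀ q : Ideal R, q.IsPrime → I ≤ q → x ∈ q → q = maximalIdeal R) {q : Ideal R}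
    [hq : q.IsPrime] (hIq : I ≤ q) (hxq : x ∉ q) : q ∈ I.minimalPrimes := by
  obtain ⟨p, hp, hpq⟩ := Ideal.exists_minimalPrimes_le hIq
  have hpp : p.IsPrime := hp.1.1
  obtain rfl | hlt := hpq.eq_or_lt
  · exact hp
  have hqm : q < maximalIdeal R :=
    lt_of_le_of_ne (le_maximalIdeal hq.ne_top) fun h => hxq (h ▸ hx)
  have hmin : maximalIdeal R ∈ (p ⊔ Ideal.span {x}).minimalPrimes := by
    refine ⟨⟨inferInstance, sup_le (hlt.trans hqm).le
      ((Ideal.span_singleton_le_iff_mem _).2 hx)⟩, fun r hr _ => ?_⟩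
    exact (hIx r hr.1 (hp.1.2.trans (le_sup_left.trans hr.2))
      (hr.2 (Ideal.mem_sup_right (Ideal.mem_span_singleton_self x)))).ge
  have hprime {r : Ideal R} [r.IsPrime] (hr : p ≤ r) : (r.map (Ideal.Quotient.mk p)).IsPrime :=
    Ideal.map_isPrime_of_surjective Ideal.Quotient.mk_surjective (by rwa [Ideal.mk_ker])
  have hmap {r s : Ideal R} (hr : p ≤ r) (hrs : r < s) :
      r.map (Ideal.Quotient.mk p) < s.map (Ideal.Quotient.mk p) := by
    refine lt_of_le_of_ne (Ideal.map_mono hrs.le) fun h => hrs.ne ?_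
    rw [← Ideal.comap_map_mk hr, h, Ideal.comap_map_mk (hr.trans hrs.le)]
  have := hprime le_rfl
  have := hprime hlt.le
  have := hprime (hlt.trans hqm).le
  have h1 := Ideal.height_add_one_le_of_lt_of_isPrime (hmap le_rfl hlt)
  have h2 := Ideal.height_add_one_le_of_lt_of_isPrime (hmap hlt.le hqm)
  have h3 := (add_le_add_left h1 1).trans
    (h2.trans (Ideal.map_height_le_one_of_mem_minimalPrimes hmin))
  have h4 : (1 + 1 : ℕ∞) ≤ 1 := (add_le_add_left le_add_self 1).trans h3
  exact absurd h4 (by decide)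

/-- Symbolic powers of a one-dimensional ideal `I` are computed by saturating with respect to a
parameter modulo `I`. -/
theorem symbolicPower_eq_of_parameter {R : Type*} [CommRing R] [IsNoetherianRing R]
    [IsLocalRing R] {I : Ideal R} {x : R} (hx : x ∈ maximalIdeal R) (hI : I ≤ maximalIdeal R)
    (hIx : ∀ q : Ideal R, q.IsPrime → I ≤ q → x ∈ q → q = maximalIdeal R)
    (hsat : ∀ r, x * r ∈ I → r ∈ I) {n : ℕ} {J K : Ideal R} (hIJ : I ^ n ≤ J)
    (hJ : ∀ r, x * r ∈ J → r ∈ J) (hJK : J ≤ K) (hK : ∀ r ∈ K, ∃ k, x ^ k * r ∈ I ^ n) :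
    symbolicPower I n = K := by
  have hpow {J : Ideal R} (hJ : ∀ r, x * r ∈ J → r ∈ J) (k : ℕ) (r : R)
      (hr : x ^ k * r ∈ J) : r ∈ J := by
    induction k with
    | zero => simpa using hr
    | succ k ih => exact ih (hJ _ (by rwa [← mul_assoc, ← pow_succ']))
  have hmem (r : R) : r ∈ symbolicPower I n ↔
      ∀ p ∈ I.minimalPrimes, ∃ s ∉ p, s * r ∈ I ^ n := by
    simp only [symbolicPower, Submodule.mem_iInf, Subtype.forall, Ideal.mem_comap]
    refine forall₂_congr fun p hp => ?_
    have : p.IsPrime := hp.1.1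
    exact IsLocalization.algebraMap_mem_map_algebraMap_iff p.primeCompl _ _ _
  refine le_antisymm (fun r hr => hJK ?_) fun r hr => (hmem r).2 fun p hp => ?_
  · rw [hmem] at hr
    have hrad : x ∈ (Submodule.colon (I ^ n) {r}).radical := by
      rw [Ideal.radical_eq_sInf, Submodule.mem_sInf]
      rintro q ⟨hq, hqp⟩
      by_contra hxq
      have hIq : I ≤ q := hqp.le_of_pow_le (n := n) fun s hs =>
        hq (Submodule.mem_colon_singleton.2 (Ideal.mul_mem_right _ _ hs))
      obtain ⟨s, hs, hsr⟩ := hr q (mem_minimalPrimes_of_notMem hx hIx hIq hxq)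
      exact hs (hq (Submodule.mem_colon_singleton.2 hsr))
    obtain ⟨k, hk⟩ := hrad
    exact hpow hJ k r (hIJ (Submodule.mem_colon_singleton.1 hk))
  · obtain ⟨k, hk⟩ := hK r hr
    refine ⟨x ^ k, fun hxp => ?_, hk⟩
    have hp' : p.IsPrime := hp.1.1
    have hpm : p = maximalIdeal R := hIx p hp' hp.1.2 (hp'.mem_of_pow_mem _ hxp)
    have hrad : x ∈ I.radical := by
      rw [Ideal.radical_eq_sInf, Submodule.mem_sInf]
      rintro q ⟨hq, hqp⟩
      exact hp.2 ⟨hqp, hq⟩ (hpm ▸ le_maximalIdeal hqp.ne_top) (hpm ▸ hx)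
    obtain ⟨k, hk⟩ := hrad
    exact (Ideal.ne_top_iff_one _).1 (maximalIdeal.isMaximal R).ne_top
      (hI (hpow hsat k 1 (by rwa [mul_one])))

theorem symbolicPower_curveIdeal {R : Type*} [CommRing R] [IsNoetherianRing R]
    [IsLocalRing R] (hdim : ringKrullDim R = 3) {x y z : R}
    (h : maximalIdeal R = Ideal.span {x, y, z}) (n : ℕ) :
    symbolicPower (curveIdeal x y z) n =
      deltaFiltration (curveIdeal x y z) (curveDelta x y z) n (n / 2) := by
  obtain ⟨_, hx, hxy, hz⟩ := regular_parameters hdim x y z h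
  obtain ⟨_, -, -, hy'⟩ := regular_parameters hdim x z y (by
    rw [h]; congr 1; ext; simp; tauto)
  obtain ⟨_, -, -, hx'⟩ := regular_parameters hdim y z x (by
    rw [h]; congr 1; ext; simp; tauto)
  have hy : y ∉ Ideal.span {x} := fun h => hy' (Ideal.span_mono (by simp) h)
  have hx0 : x ≠ 0 := fun h => hx' (h ▸ zero_mem _)
  have hxm : x ∈ maximalIdeal R := h ▸ Ideal.subset_span (by simp)
  have hmodel := mem_symbolicModel_of_mul_mem hx0 hx hxy hy hz
  have hI : curveIdeal x y z ≤ maximalIdeal R :=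
    (curveIdeal_le_sq x y z).trans (h ▸ Ideal.pow_le_self two_ne_zero)
  have hIx (q : Ideal R) (hq : q.IsPrime) (hIq : curveIdeal x y z ≤ q) (hxq : x ∈ q) :
      q = maximalIdeal R := by
    refine le_antisymm (le_maximalIdeal hq.ne_top) ?_
    have hg1 : z ^ 2 - x ^ 2 * y ∈ q := hIq (Ideal.subset_span (by simp))
    have hg3 : y ^ 2 - x * z ∈ q := hIq (Ideal.subset_span (by simp))
    rw [h, Ideal.span_le]
    rintro _ (rfl | rfl | rfl)
    · exact hxq
    · exact hq.mem_of_pow_mem 2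
        ((Submodule.sub_mem_iff_left _ (Ideal.mul_mem_right _ _ hxq)).1 hg3)
    · exact hq.mem_of_pow_mem 2 ((Submodule.sub_mem_iff_left _
        (Ideal.mul_mem_right _ _ (Ideal.pow_mem_of_mem _ hxq 2 two_pos))).1 hg1)
  have hsat (r : R) (hr : x * r ∈ curveIdeal x y z) : r ∈ curveIdeal x y z := by
    refine oddSymbolicModel_zero_le ((hmodel 0).2 r ((pow_le_symbolicModel 0).2 ?_))
    rwa [mul_zero, zero_add, pow_one]
  have hK (r : R) (hr : r ∈ deltaFiltration (curveIdeal x y z) (curveDelta x y z) n (n / 2)) :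
      ∃ k, x ^ k * r ∈ curveIdeal x y z ^ n :=
    ⟨_, pow_mul_mem_pow_of_mem_deltaFiltration (Nat.mul_div_le n 2) hr⟩
  obtain ⟨k, rfl | rfl⟩ := n.even_or_odd'
  · refine symbolicPower_eq_of_parameter hxm hI hIx hsat (pow_le_symbolicModel k).1 (hmodel k).1
      ?_ hK
    rw [Nat.mul_div_cancel_left k two_pos]
    exact (symbolicModel_le_deltaFiltration k).1
  · refine symbolicPower_eq_of_parameter hxm hI hIx hsat (pow_le_symbolicModel k).2 (hmodel k).2
      ?_ hK
    rw [show (2 * k + 1) / 2 = k by omega]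
    exact (symbolicModel_le_deltaFiltration k).2

theorem hasLength_of_length_eq {R M : Type*} [CommRing R] [AddCommGroup M] [Module R M] {n : ℕ}
    (h : Module.length R M = n) : HasLength R M n := by
  obtain ⟨s, h₀, h₁⟩ := isFiniteLength_iff_exists_compositionSeries.1
    (Module.length_ne_top_iff.1 (h ▸ ENat.natCast_ne_top n))
  refine ⟨s, h₀, h₁, ?_⟩
  have h2 := Module.length_compositionSeries s h₀ h₁
  rw [h] at h2
  exact_mod_cast h2

theorem sum_choose_bounds (n : ℕ) :
    2 * n ^ 3 + 3 * n ^ 2 ≤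
        24 * ∑ i ∈ Finset.range (n / 2), (n - 2 * (i + 1) + 2).choose 2 + 2 * n + 3 ∧
      24 * ∑ i ∈ Finset.range (n / 2), (n - 2 * (i + 1) + 2).choose 2 ≤
        2 * n ^ 3 + 3 * n ^ 2 := by
  induction n using Nat.twoStepInduction with
  | zero => simp
  | one => simp
  | more n ih _ =>
    have hc : 2 * (n + 2).choose 2 = (n + 2) * (n + 1) := by
      rw [Nat.choose_two_right, Nat.mul_div_cancel' (Nat.even_mul_pred_self (n + 2)).two_dvd]
      rfl
    have hs : ∑ i ∈ Finset.range ((n + 2) / 2), (n + 2 - 2 * (i + 1) + 2).choose 2 =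
        ∑ i ∈ Finset.range (n / 2), (n - 2 * (i + 1) + 2).choose 2 + (n + 2).choose 2 := by
      rw [show (n + 2) / 2 = n / 2 + 1 by omega, Finset.sum_range_succ']
      congr 1
      refine Finset.sum_congr rfl fun i _ => ?_
      rw [show n + 2 - 2 * (i + 1 + 1) = n - 2 * (i + 1) by omega]
    rw [hs]
    constructor <;> nlinarith

theorem tendsto_six_div_pow_mul {L : ℕ → ℕ}
    (hL : ∀ n, 2 * n ^ 3 + 3 * n ^ 2 ≤ 24 * L n + 2 * n + 3 ∧ 24 * L n ≤ 2 * n ^ 3 + 3 * n ^ 2) :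
    Tendsto (fun n : ℕ => (6 : ℝ) / (n : ℝ) ^ 3 * (L n : ℝ)) atTop (nhds (1 / 2)) := by
  have h1 : Tendsto (fun n : ℕ => (1 : ℝ) / 2 + 3 / 4 * (n : ℝ)⁻¹) atTop (nhds (1 / 2)) := by
    simpa using ((tendsto_inv_atTop_nhds_zero_nat (𝕜 := ℝ)).const_mul (3 / 4)).const_add (1 / 2 : ℝ)
  have h2 : Tendsto (fun n : ℕ => (1 : ℝ) / 2 - 2 * (n : ℝ)⁻¹) atTop (nhds (1 / 2)) := by
    simpa using ((tendsto_inv_atTop_nhds_zero_nat (𝕜 := ℝ)).const_mul 2).const_sub (1 / 2 : ℝ)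
  refine tendsto_of_tendsto_of_tendsto_of_le_of_le' h2 h1 ?_ ?_
  all_goals
    filter_upwards [eventually_ge_atTop 1] with n hn
    have hn' : (1 : ℝ) ≤ n := by exact_mod_cast hn
    obtain ⟨ha, hb⟩ := hL n
    have ha' : (2 * n ^ 3 + 3 * n ^ 2 : ℝ) ≤ 24 * L n + 2 * n + 3 := by exact_mod_cast ha
    have hb' : (24 * L n : ℝ) ≤ 2 * n ^ 3 + 3 * n ^ 2 := by exact_mod_cast hb
    have hn0 : (n : ℝ) ≠ 0 := by positivity
    have hn3 : (0 : ℝ) < (n : ℝ) ^ 3 := by positivity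
  · rw [div_mul_eq_mul_div, le_div_iff₀ hn3]
    have : ((1 : ℝ) / 2 - 2 * (n : ℝ)⁻¹) * n ^ 3 = n ^ 3 / 2 - 2 * n ^ 2 := by field_simp
    rw [this]
    nlinarith
  · rw [div_mul_eq_mul_div, div_le_iff₀ hn3]
    have : ((1 : ℝ) / 2 + 3 / 4 * (n : ℝ)⁻¹) * n ^ 3 = n ^ 3 / 2 + 3 / 4 * n ^ 2 := by field_simp
    rw [this]
    nlinarith

/-- Let `R` be a 3-dimensional regular local ring with `m = (x, y, z)` and
`I = (z² - x²y, x³ - yz, y² - xz)`.  The ε-multiplicity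
`ε(I) = lim_n (3!/n³)·length(I⁽ⁿ⁾/Iⁿ)` exists and equals `1/2`. -/
theorem epsilon_multiplicity_eq_half
    {R : Type*} [CommRing R] [IsNoetherianRing R] [IsLocalRing R]
    (hdim : ringKrullDim R = 3)
    (x y z : R) (hreg : maximalIdeal R = Ideal.span {x, y, z})
    (I : Ideal R)
    (hI : I = Ideal.span {z ^ 2 - x ^ 2 * y, x ^ 3 - y * z, y ^ 2 - x * z}) :
    ∃ L : ℕ → ℕ,
      (∀ n : ℕ, 1 ≤ n →
        HasLength R
          (↥(symbolicPower I n) ⧸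
            Submodule.comap (symbolicPower I n).subtype ((I ^ n : Ideal R) : Submodule R R))
          (L n)) ∧
      Tendsto (fun n : ℕ => (6 : ℝ) / (n : ℝ) ^ 3 * (L n : ℝ)) atTop (nhds (1 / 2)) := by
  refine ⟨fun n => ∑ i ∈ Finset.range (n / 2), (n - 2 * (i + 1) + 2).choose 2, fun n _ => ?_,
    tendsto_six_div_pow_mul sum_choose_bounds⟩
  obtain rfl : I = curveIdeal x y z := hI
  refine hasLength_of_length_eq ?_
  rw [symbolicPower_curveIdeal hdim hreg]
  exact length_deltaFiltration hdim hreg (Nat.mul_div_le n 2)
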